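/- arXiv:2209.14720 — 2 statements merged into one kernel-verified Lean document; each statement's English description precedes it below -/
import Mathlib

section
/- Let m ≥ 4 be an integer, let Δ_m ⊂ ℝ² be the convex hull of (0,0), (m,0), (m,m−3), (m−3/2, m−3/2), and let P_m(x,y) = 4·x^{2m−7}·y^{2m−7}·(x+y)²·(x−y)². Define x̄ = (∫_{Δ_m} x·P_m(x,y) dxdy)/(∫_{Δ_m} P_m(x,y) dxdy) and ȳ = (∫_{Δ_m} y·P_m(x,y) dxdy)/(∫_{Δ_m} P_m(x,y) dxdy). Then x̄ > m−1 and x̄ + ȳ > 2m−4. -/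
open MeasureTheory

/-! The polytope is the union of the two cones with apex `0` over its facets on the lines `x = m`
and `x + y = 2m - 3`. The density is homogeneous, so integrating radially turns each inequality
into the positivity of a combination of one-dimensional integrals over these two facets.

For `x̄ > m - 1` the facet `x = m` contributes a nonnegative amount; on the other facet the density
is a multiple of `(1 - ζt²)ⁿ t²` with `n = 2m - 7` and `ζ = (3 / (2m - 3))²`, and Bernoulli's
inequality is sharp enough. For `x̄ + ȳ > 2m - 4` it is the facet `x + y = 2m - 3` that contributes
a positive amount, and this outweighs a crude lower bound for the contribution of `x = m`.
-/

section

open Set AffineMap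
open scoped Nat

/-- The determinant of two plane vectors, that is, twice the signed area of the triangle they
span. -/
def cross (u v : ℝ × ℝ) : ℝ := u.1 * v.2 - u.2 * v.1

theorem convexHull_zero_pair_eq_insert {E : Type*} [AddCommGroup E] [Module ℝ E] (u v : E) :
    convexHull ℝ {0, u, v} =
      insert 0 ((fun p : ℝ × ℝ => p.1 • lineMap u v p.2) '' Ioc 0 1 ×ˢ Icc 0 1) := by
  ext p
  rw [convexHull_insert (insert_nonempty _ _), convexHull_pair]
  simp only [mem_convexJoin, mem_singleton_iff, exists_eq_left, segment_eq_image_lineMap,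
    exists_mem_image]
  constructor
  · rintro ⟨t, ht, r, hr, rfl⟩
    rw [lineMap_apply_module', sub_zero, add_zero]
    rcases hr.1.eq_or_lt with rfl | hr0
    · exact .inl (zero_smul ℝ _)
    · exact .inr ⟨(r, t), ⟨⟨hr0, hr.2⟩, ht⟩, rfl⟩
  · rintro (rfl | ⟨⟨r, t⟩, ⟨hr, ht⟩, rfl⟩)
    · exact ⟨0, by simp, 0, by simp⟩
    · exact ⟨t, ht, r, Ioc_subset_Icc_self hr, by simp [lineMap_apply_module' (0 : E)]⟩

theorem mem_convexHull_zero_pair {E : Type*} [AddCommGroup E] [Module ℝ E] {u v p : E} :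
    p ∈ convexHull ℝ {0, u, v} ↔
      ∃ r s : ℝ, 0 ≤ r ∧ 0 ≤ s ∧ r + s ≤ 1 ∧ r • u + s • v = p := by
  constructor
  · rw [convexHull_zero_pair_eq_insert]
    rintro (rfl | ⟨⟨r, t⟩, ⟨hr, ht⟩, rfl⟩)
    · exact ⟨0, 0, by simp⟩
    · refine ⟨r * (1 - t), r * t, mul_nonneg hr.1.le (sub_nonneg.2 ht.2), mul_nonneg hr.1.le ht.1,
        by linarith [hr.2], ?_⟩
      simp only [lineMap_apply_module]
      module
  · rintro ⟨r, s, hr, hs, hrs, rfl⟩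
    have hmem := (convex_convexHull ℝ {0, u, v}).sum_mem (t := Finset.univ)
      (w := ![1 - r - s, r, s]) (z := ![0, u, v])
      (by simp [Fin.forall_fin_succ, hr, hs]; linarith) (by simp [Fin.sum_univ_three]; ring)
      (fun i _ => subset_convexHull ℝ _ (by fin_cases i <;> simp))
    simpa [Fin.sum_univ_three] using hmem

theorem hasFDerivAt_smul_lineMap (u v p : ℝ × ℝ) :
    HasFDerivAt (fun p : ℝ × ℝ => p.1 • lineMap (k := ℝ) u v p.2)
      (Matrix.toLin (.finTwoProd ℝ) (.finTwoProd ℝ)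
        !![u.1 + p.2 * (v.1 - u.1), p.1 * (v.1 - u.1);
          u.2 + p.2 * (v.2 - u.2), p.1 * (v.2 - u.2)]).toContinuousLinearMap p := by
  have coord (a b : ℝ) : HasFDerivAt (fun p : ℝ × ℝ => p.1 * (p.2 * (b - a) + a))
      (p.1 • (b - a) • .snd ℝ ℝ ℝ + (p.2 * (b - a) + a) • .fst ℝ ℝ ℝ) p :=
    hasFDerivAt_fst.mul ((hasFDerivAt_snd.mul_const (b - a)).add_const a)
  rw [Matrix.toLin_finTwoProd_toContinuousLinearMap]
  convert! (coord u.1 v.1).prodMk (coord u.2 v.2) using 1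
  ext <;> simp <;> ring

theorem injOn_smul_lineMap {u v : ℝ × ℝ} (huv : cross u v ≠ 0) :
    InjOn (fun p : ℝ × ℝ => p.1 • lineMap (k := ℝ) u v p.2) (Ioc 0 1 ×ˢ Icc 0 1) := by
  rintro ⟨r, t⟩ ⟨hr, -⟩ ⟨r', t'⟩ - h
  simp only [lineMap_apply_module', Prod.ext_iff, Prod.smul_fst, Prod.smul_snd, Prod.fst_add,
    Prod.snd_add, Prod.fst_sub, Prod.snd_sub, smul_eq_mul] at h
  have hcoeff : r * (1 - t) = r' * (1 - t') ∧ r * t = r' * t' := by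
    constructor <;> refine mul_right_cancel₀ huv ?_ <;> unfold cross
    · linear_combination v.2 * h.1 - v.1 * h.2
    · linear_combination u.1 * h.2 - u.2 * h.1
  obtain rfl : r = r' := by linarith
  exact Prod.ext rfl (mul_left_cancel₀ hr.1.ne' hcoeff.2)

/- In the coordinates `p = r • q` with `q` on the edge opposite the origin, the area element is
`|cross u v| r dr dt` and the radial integral is `∫ r ^ (d + 1) dr`. -/
theorem setIntegral_triangle_of_homogeneous {h : ℝ × ℝ → ℝ} {d : ℕ}
    (hh : ∀ r : ℝ, 0 < r → ∀ p, h (r • p) = r ^ d * h p) {u v : ℝ × ℝ} (huv : cross u v ≠ 0) :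
    ∫ p in convexHull ℝ {0, u, v}, h p =
      |cross u v| / (d + 2) * ∫ t in (0 : ℝ)..1, h (lineMap u v t) := by
  have hmeas : MeasurableSet (Ioc (0 : ℝ) 1 ×ˢ Icc (0 : ℝ) 1) :=
    measurableSet_Ioc.prod measurableSet_Icc
  rw [convexHull_zero_pair_eq_insert, setIntegral_congr_set (insert_ae_eq_self _ _),
    integral_image_eq_integral_abs_det_fderiv_smul volume hmeas
      (fun p _ => (hasFDerivAt_smul_lineMap u v p).hasFDerivWithinAt) (injOn_smul_lineMap huv)]
  calc
    _ = ∫ p in Ioc (0 : ℝ) 1 ×ˢ Icc (0 : ℝ) 1,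
          (|cross u v| * p.1 ^ (d + 1)) * h (lineMap u v p.2) := by
      refine setIntegral_congr_fun hmeas fun p hp => ?_
      have hr : 0 < p.1 := hp.1.1
      have hdet : (u.1 + p.2 * (v.1 - u.1)) * (p.1 * (v.2 - u.2)) -
          p.1 * (v.1 - u.1) * (u.2 + p.2 * (v.2 - u.2)) = cross u v * p.1 := by
        unfold cross; ring
      simp only [LinearMap.det_toContinuousLinearMap, LinearMap.det_toLin, Matrix.det_fin_two_of,
        hdet, abs_mul, abs_of_pos hr, hh p.1 hr, smul_eq_mul]
      ring
    _ = (∫ r in (0 : ℝ)..1, |cross u v| * r ^ (d + 1)) *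
          ∫ t in (0 : ℝ)..1, h (lineMap u v t) := by
      rw [Measure.volume_eq_prod, setIntegral_prod_mul (fun r => |cross u v| * r ^ (d + 1))
        (fun t => h (lineMap u v t)), integral_Icc_eq_integral_Ioc,
        intervalIntegral.integral_of_le zero_le_one, intervalIntegral.integral_of_le zero_le_one]
    _ = _ := by
      rw [intervalIntegral.integral_const_mul, integral_pow]
      push_cast
      ring

theorem exists_of_mem_convexHull_zero_triple {E : Type*} [AddCommGroup E] [Module ℝ E]
    {a b c p : E} (hp : p ∈ convexHull ℝ {0, a, b, c}) :
    ∃ r s t : ℝ, 0 ≤ r ∧ 0 ≤ s ∧ 0 ≤ t ∧ r + s + t ≤ 1 ∧ r • a + s • b + t • c = p := by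
  rw [insert_comm, convexHull_insert (insert_nonempty _ _)] at hp
  simp only [mem_convexJoin, mem_singleton_iff, exists_eq_left] at hp
  obtain ⟨q, hq, k, l, hk, hl, hkl, rfl⟩ := hp
  obtain ⟨s, t, hs, ht, hst, rfl⟩ := mem_convexHull_zero_pair.1 hq
  exact ⟨k, l * s, l * t, hk, mul_nonneg hl hs, mul_nonneg hl ht, by nlinarith, by module⟩

/- Trading the largest admissible multiple of `α • a + γ • c` for `b` removes `a` from the
combination without increasing the sum of its coefficients. -/
theorem smul_add_smul_add_smul_mem_convexHull {E : Type*} [AddCommGroup E] [Module ℝ E]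
    {a b c : E} {α γ r s t : ℝ} (hα : 0 < α) (hγ : 0 < γ) (hαγ : 1 ≤ α + γ)
    (hb : b = α • a + γ • c) (hr : 0 ≤ r) (hs : 0 ≤ s) (hrst : r + s + t ≤ 1)
    (hrt : r / α ≤ t / γ) : r • a + s • b + t • c ∈ convexHull ℝ {0, c, b} := by
  have hrα : r / α * α = r := div_mul_cancel₀ r hα.ne'
  have hsum : 0 ≤ r / α * (α + γ - 1) := mul_nonneg (by positivity) (sub_nonneg.2 hαγ)
  refine mem_convexHull_zero_pair.2 ⟨t - r / α * γ, s + r / α,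
    sub_nonneg.2 ((le_div_iff₀ hγ).1 hrt), by positivity, by linarith, ?_⟩
  rw [hb]
  match_scalars
  · ring
  · linear_combination hrα

theorem convexHull_zero_triple_eq_union {E : Type*} [AddCommGroup E] [Module ℝ E] {a b c : E}
    {α γ : ℝ} (hα : 0 < α) (hγ : 0 < γ) (hαγ : 1 ≤ α + γ) (hb : b = α • a + γ • c) :
    convexHull ℝ {0, a, b, c} = convexHull ℝ {0, a, b} ∪ convexHull ℝ {0, c, b} := by
  refine Subset.antisymm (fun p hp => ?_) (union_subset ?_ ?_)
  · obtain ⟨r, s, t, hr, hs, ht, hrst, rfl⟩ := exists_of_mem_convexHull_zero_triple hp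
    rcases le_total (r / α) (t / γ) with hrt | htr
    · exact .inr (smul_add_smul_add_smul_mem_convexHull hα hγ hαγ hb hr hs hrst hrt)
    · rw [show r • a + s • b + t • c = t • c + s • b + r • a by abel]
      exact .inl (smul_add_smul_add_smul_mem_convexHull hγ hα (by linarith)
        (by rw [hb, add_comm]) ht hs (by linarith) htr)
  all_goals exact convexHull_mono (by grind)

theorem aedisjoint_convexHull_zero_pair {a b c : ℝ × ℝ} (hab : 0 < cross a b)
    (hbc : 0 < cross b c) :
    AEDisjoint volume (convexHull ℝ {0, a, b}) (convexHull ℝ {0, c, b}) := by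
  have hspan : Submodule.span ℝ {b} ≠ ⊤ := by
    intro htop
    obtain ⟨s, rfl⟩ := Submodule.mem_span_singleton.1 (htop ▸ Submodule.mem_top (x := a))
    exact hab.ne' (by simp [cross]; ring)
  refine measure_mono_null (fun p hp => ?_) (Measure.addHaar_submodule volume _ hspan)
  obtain ⟨r, s, hr, -, -, rfl⟩ := mem_convexHull_zero_pair.1 hp.1
  obtain ⟨t, w, ht, -, -, hp_eq⟩ := mem_convexHull_zero_pair.1 hp.2
  have hcross : r * cross a b = -(t * cross b c) := by
    simp only [Prod.ext_iff, Prod.fst_add, Prod.snd_add, Prod.smul_fst, Prod.smul_snd,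
      smul_eq_mul] at hp_eq
    unfold cross
    linear_combination b.1 * hp_eq.2 - b.2 * hp_eq.1
  obtain rfl : r = 0 := by
    have : r * cross a b ≤ 0 := hcross ▸ neg_nonpos.2 (mul_nonneg ht hbc.le)
    nlinarith
  simpa using Submodule.smul_mem _ s (Submodule.mem_span_singleton_self b)

theorem setIntegral_quadrilateral_of_homogeneous {h : ℝ × ℝ → ℝ} {d : ℕ} (hc : Continuous h)
    (hh : ∀ r : ℝ, 0 < r → ∀ p, h (r • p) = r ^ d * h p) {a b c : ℝ × ℝ} {α γ : ℝ}
    (hα : 0 < α) (hγ : 0 < γ) (hαγ : 1 ≤ α + γ) (hb : b = α • a + γ • c)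
    (hac : 0 < cross a c) :
    (d + 2) * ∫ p in convexHull ℝ {0, a, b, c}, h p =
      cross a b * (∫ t in (0 : ℝ)..1, h (lineMap a b t)) +
      cross b c * ∫ t in (0 : ℝ)..1, h (lineMap c b t) := by
  have hab : 0 < cross a b := by
    have : cross a b = γ * cross a c := by rw [hb]; simp [cross]; ring
    rw [this]; positivity
  have hbc : 0 < cross b c := by
    have : cross b c = α * cross a c := by rw [hb]; simp [cross]; ring
    rw [this]; positivity
  have hcb : cross c b = - cross b c := by unfold cross; ring
  have hcompact (u v : ℝ × ℝ) : IsCompact (convexHull ℝ {0, u, v}) :=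
    (toFinite {0, u, v}).isCompact_convexHull (𝕜 := ℝ)
  rw [convexHull_zero_triple_eq_union hα hγ hαγ hb, setIntegral_union₀
    (aedisjoint_convexHull_zero_pair hab hbc) (hcompact c b).measurableSet.nullMeasurableSet
    (hc.continuousOn.integrableOn_compact (hcompact a b))
    (hc.continuousOn.integrableOn_compact (hcompact c b)),
    setIntegral_triangle_of_homogeneous hh hab.ne',
    setIntegral_triangle_of_homogeneous hh (by rw [hcb]; exact neg_ne_zero.2 hbc.ne'),
    hcb, abs_neg, abs_of_pos hab, abs_of_pos hbc]
  field_simp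

theorem integral_pow_mul_one_sub_pow (n k : ℕ) :
    ∫ t in (0 : ℝ)..1, t ^ n * (1 - t) ^ k = n ! * k ! / (n + k + 1)! := by
  induction k generalizing n with
  | zero =>
    simp only [pow_zero, mul_one, integral_pow, add_zero, Nat.factorial_succ, Nat.factorial_zero]
    push_cast
    field_simp
    simp
  | succ k ih =>
    have hsplit (t : ℝ) :
        t ^ n * (1 - t) ^ (k + 1) = t ^ n * (1 - t) ^ k - t ^ (n + 1) * (1 - t) ^ k := by ring
    simp_rw [hsplit]
    rw [intervalIntegral.integral_sub (Continuous.intervalIntegrable (by fun_prop) _ _)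
        (Continuous.intervalIntegrable (by fun_prop) _ _), ih, ih,
      show n + 1 + k + 1 = n + k + 1 + 1 by ring, ← add_assoc, Nat.factorial_succ (n + k + 1),
      Nat.factorial_succ n, Nat.factorial_succ k]
    push_cast
    field_simp
    ring

theorem le_integral_one_sub_mul_sq_pow_mul_sub {ζ s : ℝ} (hζ₀ : 0 ≤ ζ) (hζ₁ : ζ ≤ 1) (hs : s ≤ 1)
    (n : ℕ) :
    1 / 4 - s / 3 - n * ζ * (1 - s) / 5 ≤
      ∫ t in (0 : ℝ)..1, (1 - ζ * t ^ 2) ^ n * t ^ 2 * (t - s) := by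
  have hbound (t : ℝ) (ht : t ∈ Icc (0 : ℝ) 1) :
      t ^ 3 - s * t ^ 2 - n * ζ * (1 - s) * t ^ 4 ≤ (1 - ζ * t ^ 2) ^ n * t ^ 2 * (t - s) := by
    have hζt : ζ * t ^ 2 ≤ 1 := mul_le_one₀ hζ₁ (sq_nonneg t) (pow_le_one₀ ht.1 ht.2)
    have hle_one : (1 - ζ * t ^ 2) ^ n ≤ 1 :=
      pow_le_one₀ (sub_nonneg.2 hζt) (sub_le_self _ (by positivity))
    have hbernoulli : 1 + n * -(ζ * t ^ 2) ≤ (1 - ζ * t ^ 2) ^ n :=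
      one_add_mul_le_pow (by linarith) n
    have hdefect : (1 - (1 - ζ * t ^ 2) ^ n) * (t - s) ≤ n * (ζ * t ^ 2) * (1 - s) :=
      calc
        _ ≤ (1 - (1 - ζ * t ^ 2) ^ n) * (1 - s) :=
          mul_le_mul_of_nonneg_left (by linarith [ht.2]) (sub_nonneg.2 hle_one)
        _ ≤ _ := mul_le_mul_of_nonneg_right (by linarith) (sub_nonneg.2 hs)
    linear_combination t ^ 2 * hdefect
  calc
    _ = ∫ t in (0 : ℝ)..1, (t ^ 3 - s * t ^ 2 - n * ζ * (1 - s) * t ^ 4) := by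
      rw [intervalIntegral.integral_sub (Continuous.intervalIntegrable (by fun_prop) _ _)
        (Continuous.intervalIntegrable (by fun_prop) _ _),
        intervalIntegral.integral_sub (Continuous.intervalIntegrable (by fun_prop) _ _)
        (Continuous.intervalIntegrable (by fun_prop) _ _)]
      simp only [intervalIntegral.integral_const_mul, integral_pow]
      norm_num
      ring
    _ ≤ _ := intervalIntegral.integral_mono_on zero_le_one
      (Continuous.intervalIntegrable (by fun_prop) _ _)
      (Continuous.intervalIntegrable (by fun_prop) _ _) hbound

/- The constant part `A ^ 2` of the square contributes `A ^ 2 / ((n + 1) * (n + 2))`, which is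
nonnegative; the rest of the square is at most `4 * A * B * (1 - t) + 4 * B ^ 2 * (1 - t) ^ 2`. -/
theorem neg_le_integral_pow_mul_sub_mul_sq {A B : ℝ} (hA : 0 ≤ A) (hB : 0 ≤ B) (n : ℕ) :
    -(8 * A * B / ((n + 2) * (n + 3)) + 24 * B ^ 2 / ((n + 2) * (n + 3) * (n + 4))) ≤
      ∫ t in (0 : ℝ)..1, ((n + 1) * t - n) * (t ^ n * (A + B * (1 - t ^ 2)) ^ 2) := by
  have hbound (t : ℝ) (ht : t ∈ Icc (0 : ℝ) 1) :
      A ^ 2 * (t ^ n * (1 - t) ^ 0) - (n + 1) * A ^ 2 * (t ^ n * (1 - t) ^ 1)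
        - (n + 1) * (4 * A * B) * (t ^ n * (1 - t) ^ 2)
        - (n + 1) * (4 * B ^ 2) * (t ^ n * (1 - t) ^ 3) ≤
      ((n + 1) * t - n) * (t ^ n * (A + B * (1 - t ^ 2)) ^ 2) := by
    have hτ : 0 ≤ 1 - t := sub_nonneg.2 ht.2
    have hsq_nonneg : 0 ≤ 1 - t ^ 2 := sub_nonneg.2 (pow_le_one₀ ht.1 ht.2)
    have hsq_le : 1 - t ^ 2 ≤ 2 * (1 - t) := by nlinarith
    have hlower : A ^ 2 ≤ (A + B * (1 - t ^ 2)) ^ 2 := by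
      gcongr
      exact le_add_of_nonneg_right (by positivity)
    have hupper : (A + B * (1 - t ^ 2)) ^ 2 ≤ (A + B * (2 * (1 - t))) ^ 2 := by gcongr
    have htn : 0 ≤ t ^ n := pow_nonneg ht.1 n
    linear_combination t ^ n * hlower + t ^ n * (n + 1) * (1 - t) * hupper
  calc
    _ ≤ ∫ t in (0 : ℝ)..1, (A ^ 2 * (t ^ n * (1 - t) ^ 0) - (n + 1) * A ^ 2 * (t ^ n * (1 - t) ^ 1)
        - (n + 1) * (4 * A * B) * (t ^ n * (1 - t) ^ 2)
        - (n + 1) * (4 * B ^ 2) * (t ^ n * (1 - t) ^ 3)) := by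
      rw [intervalIntegral.integral_sub (Continuous.intervalIntegrable (by fun_prop) _ _)
        (Continuous.intervalIntegrable (by fun_prop) _ _),
        intervalIntegral.integral_sub (Continuous.intervalIntegrable (by fun_prop) _ _)
        (Continuous.intervalIntegrable (by fun_prop) _ _),
        intervalIntegral.integral_sub (Continuous.intervalIntegrable (by fun_prop) _ _)
        (Continuous.intervalIntegrable (by fun_prop) _ _)]
      simp only [intervalIntegral.integral_const_mul, integral_pow_mul_one_sub_pow]
      have hsq : 0 ≤ A ^ 2 / ((n + 1) * (n + 2)) := by positivity
      refine sub_nonneg.1 (hsq.trans_eq ?_)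
      simp only [Nat.factorial_succ, Nat.factorial_zero]
      push_cast
      field_simp
      ring
    _ ≤ _ := intervalIntegral.integral_mono_on zero_le_one
      (Continuous.intervalIntegrable (by fun_prop) _ _)
      (Continuous.intervalIntegrable (by fun_prop) _ _) hbound

/-- The moment polytope of the anticanonical bundle of the wonderful compactification of type
AIII(2, m), for a real parameter `m`. -/
noncomputable def momentPolytope (m : ℝ) : Set (ℝ × ℝ) :=
  convexHull ℝ {(0, 0), (m, 0), (m, m - 3), (m - 3 / 2, m - 3 / 2)}

/-- The Duistermaat–Heckman density of type AIII(2, m) in terms of its exponent `n = 2 * m - 7`. -/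
def dhDensity (n : ℕ) (p : ℝ × ℝ) : ℝ :=
  4 * p.1 ^ n * p.2 ^ n * (p.1 + p.2) ^ 2 * (p.1 - p.2) ^ 2

/-- Affine parametrization by `[0, 1]` of the facet of `momentPolytope m` on the line `x = m`. -/
def verticalFacet (m t : ℝ) : ℝ × ℝ := (m, (m - 3) * t)

/-- Affine parametrization by `[0, 1]` of the facet of `momentPolytope m` on the line
`x + y = 2 * m - 3`, starting on the diagonal `x = y`. -/
noncomputable def obliqueFacet (m t : ℝ) : ℝ × ℝ := (m - 3 / 2 + 3 / 2 * t, m - 3 / 2 - 3 / 2 * t)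

@[fun_prop]
theorem continuous_dhDensity (n : ℕ) : Continuous (dhDensity n) := by
  unfold dhDensity; fun_prop

@[fun_prop]
theorem continuous_verticalFacet (m : ℝ) : Continuous (verticalFacet m) := by
  unfold verticalFacet; fun_prop

@[fun_prop]
theorem continuous_obliqueFacet (m : ℝ) : Continuous (obliqueFacet m) := by
  unfold obliqueFacet; fun_prop

theorem dhDensity_smul (n : ℕ) (r : ℝ) (p : ℝ × ℝ) :
    dhDensity n (r • p) = r ^ (2 * n + 4) * dhDensity n p := by
  simp only [dhDensity, Prod.smul_fst, Prod.smul_snd, smul_eq_mul]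
  ring

theorem dhDensity_verticalFacet (n : ℕ) (m t : ℝ) :
    dhDensity n (verticalFacet m t) = 4 * (m * (m - 3)) ^ n *
      (t ^ n * (3 * (2 * m - 3) + (m - 3) ^ 2 * (1 - t ^ 2)) ^ 2) := by
  simp only [dhDensity, verticalFacet, mul_pow]
  ring

theorem dhDensity_obliqueFacet (n : ℕ) (m t : ℝ) :
    dhDensity n (obliqueFacet m t) =
      36 * (2 * m - 3) ^ 2 * (((m - 3 / 2) ^ 2 - 9 / 4 * t ^ 2) ^ n * t ^ 2) := by
  have hprod : (m - 3 / 2) ^ 2 - 9 / 4 * t ^ 2 =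
      (m - 3 / 2 + 3 / 2 * t) * (m - 3 / 2 - 3 / 2 * t) := by ring
  simp only [dhDensity, obliqueFacet, hprod, mul_pow]
  ring

theorem setIntegral_momentPolytope_of_homogeneous {h : ℝ × ℝ → ℝ} {d : ℕ} (hc : Continuous h)
    (hh : ∀ r : ℝ, 0 < r → ∀ p, h (r • p) = r ^ d * h p) {m : ℝ} (hm : 3 < m) :
    (d + 2) * ∫ p in momentPolytope m, h p =
      m * (m - 3) * (∫ t in (0 : ℝ)..1, h (verticalFacet m t)) +
      3 * (m - 3 / 2) * ∫ t in (0 : ℝ)..1, h (obliqueFacet m t) := by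
  have hm₀ : 0 < m := by linarith
  have : 0 < m - 3 := sub_pos.2 hm
  have hm₂ : 0 < m - 3 / 2 := by linarith
  have hcoeff : 1 ≤ 3 / m + (m - 3) / (m - 3 / 2) := by
    rw [div_add_div _ _ hm₀.ne' hm₂.ne', one_le_div (by positivity)]
    linarith
  have hvertex : ((m, m - 3) : ℝ × ℝ) =
      (3 / m) • (m, 0) + ((m - 3) / (m - 3 / 2)) • (m - 3 / 2, m - 3 / 2) := by
    have hfst : 3 / m * m = 3 := div_mul_cancel₀ _ hm₀.ne'
    have hsnd : (m - 3) / (m - 3 / 2) * (m - 3 / 2) = m - 3 := div_mul_cancel₀ _ hm₂.ne'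
    ext <;> simp [hfst, hsnd]
  have hcross : 0 < cross (m, 0) (m - 3 / 2, m - 3 / 2) := by
    simp only [cross, zero_mul, sub_zero]
    positivity
  have hquad := setIntegral_quadrilateral_of_homogeneous hc hh (by positivity) (by positivity)
    hcoeff hvertex hcross
  have hvertical (t : ℝ) : lineMap (m, 0) (m, m - 3) t = verticalFacet m t := by
    ext <;> simp [lineMap_apply, verticalFacet, mul_comm]
  have hoblique (t : ℝ) : lineMap (m - 3 / 2, m - 3 / 2) (m, m - 3) t = obliqueFacet m t := by
    ext <;> simp [lineMap_apply, obliqueFacet] <;> ring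
  simp only [hvertical, hoblique] at hquad
  convert! hquad using 3 <;> simp [cross]
  ring

theorem dhDensity_verticalFacet_nonneg (n : ℕ) {m t : ℝ} (hm : 3 < m) (ht : 0 ≤ t) :
    0 ≤ dhDensity n (verticalFacet m t) := by
  have : 0 < m - 3 := sub_pos.2 hm
  rw [dhDensity_verticalFacet]
  positivity

theorem le_integral_dhDensity_obliqueFacet (n : ℕ) {m : ℝ} (hm : 3 < m) :
    12 * (2 * m - 3) ^ 2 * (m * (m - 3)) ^ n ≤
      ∫ t in (0 : ℝ)..1, dhDensity n (obliqueFacet m t) := by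
  have : 0 < m - 3 := sub_pos.2 hm
  calc
    _ = ∫ t in (0 : ℝ)..1, 36 * (2 * m - 3) ^ 2 * ((m * (m - 3)) ^ n * t ^ 2) := by
      simp only [intervalIntegral.integral_const_mul, integral_pow]
      norm_num
      ring
    _ ≤ _ := by
      refine intervalIntegral.integral_mono_on zero_le_one
        (Continuous.intervalIntegrable (by fun_prop) _ _)
        (Continuous.intervalIntegrable (by fun_prop) _ _) fun t ht => ?_
      rw [dhDensity_obliqueFacet]
      have ht₂ : t ^ 2 ≤ 1 := pow_le_one₀ ht.1 ht.2
      gcongr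
      linarith

theorem setIntegral_dhDensity_pos (n : ℕ) {m : ℝ} (hm : 3 < m) :
    0 < ∫ p in momentPolytope m, dhDensity n p := by
  have : 0 < m - 3 := sub_pos.2 hm
  have hS : 0 < 2 * m - 3 := by linarith
  have hsum := setIntegral_momentPolytope_of_homogeneous (continuous_dhDensity n)
    (fun r _ p => dhDensity_smul n r p) hm
  have hvertical : 0 ≤ ∫ t in (0 : ℝ)..1, dhDensity n (verticalFacet m t) :=
    intervalIntegral.integral_nonneg zero_le_one
      fun t ht => dhDensity_verticalFacet_nonneg n hm ht.1
  have hoblique : 0 < ∫ t in (0 : ℝ)..1, dhDensity n (obliqueFacet m t) :=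
    lt_of_lt_of_le (by positivity) (le_integral_dhDensity_obliqueFacet n hm)
  refine pos_of_mul_pos_right (a := ((2 * n + 4 : ℕ) : ℝ) + 2) ?_ (by positivity)
  rw [hsum]
  have : 0 < m - 3 / 2 := by linarith
  positivity

theorem lt_average_momentPolytope {n : ℕ} {m : ℝ} (hm : 3 < m) (ℓ : ℝ × ℝ →L[ℝ] ℝ) (c : ℝ)
    (hpos : 0 <
      m * (m - 3) * (∫ t in (0 : ℝ)..1, ((2 * n + 6) * ℓ (verticalFacet m t) - (2 * n + 7) * c) *
        dhDensity n (verticalFacet m t)) +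
      3 * (m - 3 / 2) * ∫ t in (0 : ℝ)..1, ((2 * n + 6) * ℓ (obliqueFacet m t) - (2 * n + 7) * c) *
        dhDensity n (obliqueFacet m t)) :
    c < (∫ p in momentPolytope m, ℓ p * dhDensity n p) /
      ∫ p in momentPolytope m, dhDensity n p := by
  have hmass := setIntegral_momentPolytope_of_homogeneous (continuous_dhDensity n)
    (fun r _ p => dhDensity_smul n r p) hm
  have hmoment := setIntegral_momentPolytope_of_homogeneous (h := fun p => ℓ p * dhDensity n p)
    (d := 2 * n + 5) (by fun_prop)
    (fun r _ p => by rw [map_smul, dhDensity_smul, smul_eq_mul]; ring) hm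
  have hlinear {e : ℝ → ℝ × ℝ} (he : Continuous e) :
      ∫ t in (0 : ℝ)..1, ((2 * n + 6) * ℓ (e t) - (2 * n + 7) * c) * dhDensity n (e t) =
        (2 * n + 6) * (∫ t in (0 : ℝ)..1, ℓ (e t) * dhDensity n (e t)) -
          (2 * n + 7) * c * ∫ t in (0 : ℝ)..1, dhDensity n (e t) := by
    simp only [sub_mul, mul_assoc _ (ℓ _)]
    rw [intervalIntegral.integral_sub (Continuous.intervalIntegrable (by fun_prop) _ _)
      (Continuous.intervalIntegrable (by fun_prop) _ _)]
    simp only [intervalIntegral.integral_const_mul]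
  rw [hlinear (continuous_verticalFacet m), hlinear (continuous_obliqueFacet m)] at hpos
  rw [lt_div_iff₀ (setIntegral_dhDensity_pos n hm), ← sub_pos]
  refine pos_of_mul_pos_right (a := ((2 * n + 6) * (2 * n + 7) : ℝ)) ?_ (by positivity)
  push_cast at hmass hmoment
  linear_combination hpos - (2 * n + 6) * hmoment + (2 * n + 7) * c * hmass

theorem integral_mul_dhDensity_obliqueFacet_pos {n : ℕ} {m : ℝ} (hn : (n : ℝ) = 2 * m - 7) :
    0 < ∫ t in (0 : ℝ)..1, (6 * (m - 2) * t - (3 * m - 5)) * dhDensity n (obliqueFacet m t) := by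
  have : (0 : ℝ) ≤ n := n.cast_nonneg
  obtain rfl : m = (n + 7) / 2 := by linarith
  set ζ : ℝ := (3 / (n + 4)) ^ 2 with hζ
  set s : ℝ := (3 * n + 11) / (6 * (n + 3)) with hs
  have hζ₁ : ζ ≤ 1 := pow_le_one₀ (by positivity) ((div_le_one (by positivity)).2 (by linarith))
  have hs₁ : s ≤ 1 := (div_le_one (by positivity)).2 (by linarith)
  have hbound_pos : 0 < 1 / 4 - s / 3 - n * ζ * (1 - s) / 5 := by
    have hcubic : (0 : ℝ) < 15 * n ^ 3 - 17 * n ^ 2 + 62 * n + 400 := by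
      nlinarith [sq_nonneg (n - 1 : ℝ)]
    have hbound_eq : 1 / 4 - s / 3 - n * ζ * (1 - s) / 5 =
        (15 * n ^ 3 - 17 * n ^ 2 + 62 * n + 400) / (180 * (n + 3) * (n + 4) ^ 2) := by
      rw [hζ, hs]
      field_simp
      ring
    rw [hbound_eq]
    positivity
  have hintegrand (t : ℝ) :
      (6 * ((n + 7) / 2 - 2) * t - (3 * ((n + 7) / 2) - 5)) *
        dhDensity n (obliqueFacet ((n + 7) / 2) t) =
      108 * (n + 3) * (n + 4) ^ 2 * ((n + 4) / 2) ^ (2 * n) *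
        ((1 - ζ * t ^ 2) ^ n * t ^ 2 * (t - s)) := by
    have hbase : (((n + 7) / 2 - 3 / 2 : ℝ) ^ 2 - 9 / 4 * t ^ 2) =
        ((n + 4) / 2) ^ 2 * (1 - ζ * t ^ 2) := by
      rw [hζ]; field_simp; ring
    have hroot : (n + 3) * s = (3 * n + 11) / 6 := by rw [hs]; field_simp
    rw [dhDensity_obliqueFacet, hbase, mul_pow, ← pow_mul]
    linear_combination 108 * (n + 4) ^ 2 * ((n + 4) / 2) ^ (2 * n) *
        ((1 - ζ * t ^ 2) ^ n * t ^ 2) * hroot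
  simp only [hintegrand, intervalIntegral.integral_const_mul]
  exact mul_pos (by positivity)
    (hbound_pos.trans_le (le_integral_one_sub_mul_sq_pow_mul_sub (by positivity) hζ₁ hs₁ n))

theorem neg_le_integral_mul_dhDensity_verticalFacet {n : ℕ} {m : ℝ} (hn : (n : ℝ) = 2 * m - 7) :
    -(30 * (2 * m - 3) * (m * (m - 3)) ^ n) ≤
      ∫ t in (0 : ℝ)..1, ((n + 1) * t - n) * dhDensity n (verticalFacet m t) := by
  have hn₀ : (0 : ℝ) ≤ n := n.cast_nonneg
  obtain rfl : m = (n + 7) / 2 := by linarith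
  have hS : 2 * ((n + 7) / 2) - 3 = (n + 4 : ℝ) := by ring
  have hlinear : 8 * (3 * (n + 4)) * ((n + 7) / 2 - 3) ^ 2 / ((n + 2) * (n + 3)) ≤
      (6 * (n + 4) : ℝ) := by
    rw [div_le_iff₀ (by positivity)]
    nlinarith [mul_nonneg hn₀ hn₀]
  have hquadratic : 24 * (((n + 7) / 2 - 3) ^ 2) ^ 2 / ((n + 2) * (n + 3) * (n + 4)) ≤
      (3 / 2 * (n + 4) : ℝ) := by
    rw [div_le_iff₀ (by positivity)]
    have : ((n + 1) ^ 4 : ℝ) ≤ (n + 2) * (n + 3) * (n + 4) * (n + 4) := by ring_nf; nlinarith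
    linear_combination 3 / 2 * this
  have hbase : 0 ≤ ((n + 7) / 2 * ((n + 7) / 2 - 3) : ℝ) ^ n :=
    pow_nonneg (mul_nonneg (by positivity) (by linarith)) n
  have hedge := neg_le_integral_pow_mul_sub_mul_sq (A := 3 * (n + 4))
    (B := ((n + 7) / 2 - 3) ^ 2) (by positivity) (by positivity) n
  simp only [dhDensity_verticalFacet, mul_left_comm _ (4 * _ : ℝ), hS,
    intervalIntegral.integral_const_mul]
  linear_combination 4 * ((n + 7) / 2 * ((n + 7) / 2 - 3) : ℝ) ^ n *
    (hedge + hlinear + hquadratic)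

theorem lt_average_fst_momentPolytope {n : ℕ} {m : ℝ} (hn : (n : ℝ) = 2 * m - 7) :
    m - 1 < (∫ p in momentPolytope m, p.1 * dhDensity n p) /
      ∫ p in momentPolytope m, dhDensity n p := by
  have hm : 3 < m := by linarith [n.cast_nonneg (α := ℝ)]
  refine lt_average_momentPolytope hm (.fst ℝ ℝ ℝ) (m - 1) ?_
  have hvertical (t : ℝ) :
      (2 * n + 6) * (verticalFacet m t).1 - (2 * n + 7) * (m - 1) = 3 * m - 7 := by
    rw [hn, verticalFacet]; ring
  have hoblique (t : ℝ) :
      (2 * n + 6) * (obliqueFacet m t).1 - (2 * n + 7) * (m - 1) =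
        6 * (m - 2) * t - (3 * m - 5) := by
    rw [hn, obliqueFacet]; ring
  simp only [ContinuousLinearMap.coe_fst', hvertical, hoblique]
  refine add_pos_of_nonneg_of_pos (mul_nonneg (by nlinarith) ?_)
    (mul_pos (by linarith) (integral_mul_dhDensity_obliqueFacet_pos hn))
  exact intervalIntegral.integral_nonneg zero_le_one fun t ht =>
    mul_nonneg (by linarith) (dhDensity_verticalFacet_nonneg n hm ht.1)

theorem lt_average_fst_add_snd_momentPolytope {n : ℕ} {m : ℝ} (hn : (n : ℝ) = 2 * m - 7) :
    2 * m - 4 < (∫ p in momentPolytope m, (p.1 + p.2) * dhDensity n p) /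
      ∫ p in momentPolytope m, dhDensity n p := by
  have hm : 3 < m := by linarith [n.cast_nonneg (α := ℝ)]
  refine lt_average_momentPolytope hm (.fst ℝ ℝ ℝ + .snd ℝ ℝ ℝ) (2 * m - 4) ?_
  have hvertical (t : ℝ) :
      (2 * n + 6) * ((verticalFacet m t).1 + (verticalFacet m t).2) - (2 * n + 7) * (2 * m - 4) =
        (2 * m - 4) * ((n + 1) * t - n) := by
    rw [hn, verticalFacet]; ring
  have hoblique (t : ℝ) :
      (2 * n + 6) * ((obliqueFacet m t).1 + (obliqueFacet m t).2) - (2 * n + 7) * (2 * m - 4) =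
        2 * m - 4 := by
    rw [hn, obliqueFacet]; ring
  simp only [add_apply, ContinuousLinearMap.coe_fst', ContinuousLinearMap.coe_snd', hvertical,
    hoblique, mul_assoc, intervalIntegral.integral_const_mul]
  set V := ∫ t in (0 : ℝ)..1, ((n + 1) * t - n) * dhDensity n (verticalFacet m t)
  set O := ∫ t in (0 : ℝ)..1, dhDensity n (obliqueFacet m t)
  have hV : -(30 * (2 * m - 3) * (m * (m - 3)) ^ n) ≤ V :=
    neg_le_integral_mul_dhDensity_verticalFacet hn
  have hO : 12 * (2 * m - 3) ^ 2 * (m * (m - 3)) ^ n ≤ O := le_integral_dhDensity_obliqueFacet n hm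
  have : 0 < m * (m - 3) := by nlinarith
  have hS : 0 < 2 * m - 3 := by linarith
  have hcoeff : m * (m - 3) ≤ (2 * m - 3) ^ 2 / 4 := by linarith
  have hsum : 0 < m * (m - 3) * V + 3 * (m - 3 / 2) * O := by
    calc
      0 < 21 / 2 * (2 * m - 3) ^ 3 * (m * (m - 3)) ^ n := by positivity
      _ ≤ m * (m - 3) * -(30 * (2 * m - 3) * (m * (m - 3)) ^ n) +
          3 / 2 * (2 * m - 3) * (12 * (2 * m - 3) ^ 2 * (m * (m - 3)) ^ n) := by
        linear_combination 30 * (2 * m - 3) * (m * (m - 3)) ^ n * hcoeff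
      _ ≤ m * (m - 3) * V + 3 / 2 * (2 * m - 3) * O := by gcongr
      _ = _ := by ring
  have : 0 < 2 * m - 4 := by linarith
  linear_combination (2 * m - 4) * hsum

theorem barycenter_AIII_two_m_general {n : ℕ} {m : ℝ} (hn : (n : ℝ) = 2 * m - 7) :
    let xbar := (∫ p in momentPolytope m, p.1 * dhDensity n p) /
      ∫ p in momentPolytope m, dhDensity n p
    let ybar := (∫ p in momentPolytope m, p.2 * dhDensity n p) /
      ∫ p in momentPolytope m, dhDensity n p
    m - 1 < xbar ∧ 2 * m - 4 < xbar + ybar := by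
  have hintegrable {h : ℝ × ℝ → ℝ} (hh : Continuous h) : IntegrableOn h (momentPolytope m) :=
    hh.continuousOn.integrableOn_compact ((toFinite _).isCompact_convexHull (𝕜 := ℝ))
  refine ⟨lt_average_fst_momentPolytope hn, ?_⟩
  rw [← add_div, ← integral_add (hintegrable (by fun_prop)) (hintegrable (by fun_prop))]
  simpa only [add_mul] using lt_average_fst_add_snd_momentPolytope hn

end

/-- The barycenter of the moment polytope `Δ_m` of the wonderful compactification `X_m`
of the symmetric space of type AIII(2,m), with respect to the Duistermaat–Heckman measure
`P_m(x,y) dxdy`, satisfies `x̄ > m−1` and `x̄ + ȳ > 2m−4`. -/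
theorem barycenter_AIII_two_m (m : ℕ) (hm : 4 ≤ m) :
    let Δ : Set (ℝ × ℝ) := convexHull ℝ
      {((0 : ℝ), (0 : ℝ)), ((m : ℝ), 0), ((m : ℝ), (m : ℝ) - 3),
        ((m : ℝ) - 3 / 2, (m : ℝ) - 3 / 2)}
    let P : ℝ × ℝ → ℝ := fun p =>
      4 * p.1 ^ (2 * m - 7) * p.2 ^ (2 * m - 7) * (p.1 + p.2) ^ 2 * (p.1 - p.2) ^ 2
    let xbar : ℝ := (∫ p in Δ, p.1 * P p) / (∫ p in Δ, P p)
    let ybar : ℝ := (∫ p in Δ, p.2 * P p) / (∫ p in Δ, P p)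
    (m : ℝ) - 1 < xbar ∧ 2 * (m : ℝ) - 4 < xbar + ybar :=
  barycenter_AIII_two_m_general (n := 2 * m - 7) (by push_cast [show 7 ≤ 2 * m by lia]; ring)
end

section
/- Let m ≥ 6 be an integer, let Δ_m^{Bℓ} ⊂ ℝ² be the convex hull of (0,0), (m,0), (m,m−4), (m−1,m−2), (m−3/2, m−3/2), and let P_m(x,y) = 4·x^{2m−7}·y^{2m−7}·(x+y)²·(x−y)². Define x̄ = (∫_{Δ_m^{Bℓ}} x·P_m dxdy)/(∫_{Δ_m^{Bℓ}} P_m dxdy) and ȳ = (∫_{Δ_m^{Bℓ}} y·P_m dxdy)/(∫_{Δ_m^{Bℓ}} P_m dxdy). Then x̄ + ȳ < 2m−4. -/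
open MeasureTheory

/-!
The claim is that the integral of `(x + y - (2m - 4)) P_m` over the polytope is negative. Segments
from the origin to the other vertices cut the polytope into three triangles, and on a triangle
`0, a, b` a homogeneous function integrates to a multiple of its integral along the edge from `a` to
`b`. Since `P_m` is homogeneous of degree `4m - 10`, everything reduces to the integrals
of `(x + y - (2m - 7/2)) P_m` along the three edges not through the origin, weighted by the
determinants `cross a b`.

Along an edge the integrand is `(xy) ^ k` times a polynomial, where `k = 2m - 7`, and it is bounded
above by the derivative of a potential `(xy) ^ (k + 1) φ`. The potentials are chosen so that their
values at `(m - 1, m - 2)` cancel, while at `(m, m - 4)` the oblique edge contributes `117/2` and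
the vertical one `-176/3`, in units of `(2m - 3) (m (m - 4)) ^ (k + 1)`.
-/

namespace BlowupAIII

open Set

section Triangle

/-- The determinant of the pair of vectors `a`, `b`, which is twice the signed area of the triangle
with vertices `0`, `a`, `b`. -/
def cross (a b : ℝ × ℝ) : ℝ := a.1 * b.2 - a.2 * b.1

/-- The triangle with vertices `0`, `a`, `b`, for `0 < cross a b`, without its edge from `0` to `a`.
Omitting this edge makes the triangles of a fan disjoint. -/
def triangle (a b : ℝ × ℝ) : Set (ℝ × ℝ) :=
  {p | 0 < cross a p ∧ 0 ≤ cross p b ∧ cross a p + cross p b ≤ cross a b}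

/-- The coordinates `q = (r, t)` on `triangle a b` in which `r` is the ratio of the dilation
centred at `0` and `t` is the position along the edge from `a` to `b`. -/
def coneMap (a b : ℝ × ℝ) (q : ℝ × ℝ) : ℝ × ℝ := q.1 • (a + q.2 • (b - a))

variable {a b : ℝ × ℝ}

lemma cross_coneMap_right (q : ℝ × ℝ) : cross a (coneMap a b q) = q.1 * q.2 * cross a b := by
  simp only [cross, coneMap, Prod.fst_add, Prod.snd_add, Prod.smul_fst, Prod.smul_snd,
    Prod.fst_sub, Prod.snd_sub, smul_eq_mul]
  ring

lemma cross_coneMap_left (q : ℝ × ℝ) :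
    cross (coneMap a b q) b = q.1 * (1 - q.2) * cross a b := by
  simp only [cross, coneMap, Prod.fst_add, Prod.snd_add, Prod.smul_fst, Prod.smul_snd,
    Prod.fst_sub, Prod.snd_sub, smul_eq_mul]
  ring

lemma cross_smul_eq_smul_add_smul (p : ℝ × ℝ) : cross a b • p = cross p b • a + cross a p • b := by
  ext <;> simp only [cross, Prod.fst_add, Prod.snd_add, Prod.smul_fst, Prod.smul_snd, smul_eq_mul]
    <;> ring

lemma image_coneMap (hab : 0 < cross a b) :
    coneMap a b '' (Ioc 0 1 ×ˢ Ioc 0 1) = triangle a b := by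
  ext p
  constructor
  · rintro ⟨⟨r, t⟩, ⟨⟨hr, hr'⟩, ht, ht'⟩, rfl⟩
    have h1t : 0 ≤ 1 - t := sub_nonneg.2 ht'
    simp only [triangle, mem_ofPred_eq, cross_coneMap_left, cross_coneMap_right]
    exact ⟨by positivity, mul_nonneg (mul_nonneg hr.le h1t) hab.le, by nlinarith⟩
  · rintro ⟨hap, hpb, hsum⟩
    have hr : 0 < cross a p + cross p b := by positivity
    refine ⟨((cross a p + cross p b) / cross a b, cross a p / (cross a p + cross p b)),
      ⟨⟨by positivity, (div_le_one hab).2 hsum⟩, by positivity,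
        (div_le_one hr).2 (le_add_of_nonneg_right hpb)⟩, ?_⟩
    rw [← smul_right_inj hab.ne', cross_smul_eq_smul_add_smul p]
    simp only [coneMap, smul_add, smul_sub, smul_smul]
    rw [mul_div_cancel₀ _ hab.ne', ← mul_assoc, mul_div_cancel₀ _ hab.ne',
      mul_div_cancel₀ _ hr.ne']
    module

lemma injOn_coneMap (hab : cross a b ≠ 0) : InjOn (coneMap a b) (Ioc 0 1 ×ˢ Ioc 0 1) := by
  rintro ⟨r, t⟩ ⟨⟨hr, -⟩, -⟩ ⟨r', t'⟩ - h
  have hright := congrArg (cross a) h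
  have hleft := congrArg (cross · b) h
  simp only [cross_coneMap_left, cross_coneMap_right, mul_left_inj' hab] at hright hleft
  obtain rfl : r = r' := by linear_combination hleft + hright
  exact Prod.ext rfl (mul_left_cancel₀ hr.ne' hright)

lemma hasFDerivAt_coneMap (q : ℝ × ℝ) :
    HasFDerivAt (coneMap a b) (Matrix.toLin (.finTwoProd ℝ) (.finTwoProd ℝ)
      !![a.1 + q.2 * (b.1 - a.1), q.1 * (b.1 - a.1);
         a.2 + q.2 * (b.2 - a.2), q.1 * (b.2 - a.2)]).toContinuousLinearMap q := by
  rw [Matrix.toLin_finTwoProd_toContinuousLinearMap]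
  have hfst : HasFDerivAt Prod.fst (ContinuousLinearMap.fst ℝ ℝ ℝ) q := hasFDerivAt_fst
  have hsnd : HasFDerivAt Prod.snd (ContinuousLinearMap.snd ℝ ℝ ℝ) q := hasFDerivAt_snd
  convert! (hfst.mul ((hsnd.mul_const (b.1 - a.1)).const_add a.1)).prodMk
    (hfst.mul ((hsnd.mul_const (b.2 - a.2)).const_add a.2)) using 2 <;>
  simp [smul_smul, add_comm]

theorem setIntegral_triangle (hab : 0 < cross a b) {f : ℝ × ℝ → ℝ} {d : ℕ}
    (hf : ∀ r p, 0 < r → f (r • p) = r ^ d * f p) :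
    ∫ p in triangle a b, f p = cross a b / (d + 2) * ∫ t in (0)..1, f (a + t • (b - a)) := by
  have hmeas : MeasurableSet (Ioc (0 : ℝ) 1 ×ˢ Ioc (0 : ℝ) 1) :=
    measurableSet_Ioc.prod measurableSet_Ioc
  calc ∫ p in triangle a b, f p
      = ∫ q in Ioc (0 : ℝ) 1 ×ˢ Ioc (0 : ℝ) 1,
          (cross a b * q.1 ^ (d + 1)) * f (a + q.2 • (b - a)) := by
        rw [← image_coneMap hab, integral_image_eq_integral_abs_det_fderiv_smul volume hmeas
          (fun q _ => (hasFDerivAt_coneMap q).hasFDerivWithinAt) (injOn_coneMap hab.ne')]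
        refine setIntegral_congr_fun hmeas fun q hq => ?_
        have hdet : (a.1 + q.2 * (b.1 - a.1)) * (q.1 * (b.2 - a.2)) -
            q.1 * (b.1 - a.1) * (a.2 + q.2 * (b.2 - a.2)) = q.1 * cross a b := by
          simp only [cross]; ring
        simp only [LinearMap.det_toContinuousLinearMap, LinearMap.det_toLin,
          Matrix.det_fin_two_of, hdet, abs_of_pos (mul_pos hq.1.1 hab), coneMap, hf _ _ hq.1.1,
          smul_eq_mul]
        ring
    _ = (∫ r in (0)..1, cross a b * r ^ (d + 1)) * ∫ t in (0)..1, f (a + t • (b - a)) := by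
        rw [Measure.volume_eq_prod, setIntegral_prod_mul (fun r => cross a b * r ^ (d + 1))
            (fun t => f (a + t • (b - a))),
          intervalIntegral.integral_of_le zero_le_one, intervalIntegral.integral_of_le zero_le_one]
    _ = _ := by
        rw [intervalIntegral.integral_const_mul, integral_pow]
        push_cast
        ring

lemma measurableSet_triangle : MeasurableSet (triangle a b) := by
  unfold triangle cross
  measurability

lemma triangle_subset {K : Set (ℝ × ℝ)} (hK : Convex ℝ K) (h0 : 0 ∈ K) (ha : a ∈ K) (hb : b ∈ K)
    (hab : 0 < cross a b) : triangle a b ⊆ K := by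
  rw [← image_coneMap hab]
  rintro _ ⟨⟨r, t⟩, ⟨hr, ht⟩, rfl⟩
  exact hK.smul_mem_of_zero_mem h0 (hK.add_smul_sub_mem ha hb (Ioc_subset_Icc_self ht))
    (Ioc_subset_Icc_self hr)

end Triangle

section Polytope

/-- The moment polytope `Δ_m^{Bℓ}`, for a real parameter `M` in place of `m`. -/
def polytope (M : ℝ) : Set (ℝ × ℝ) :=
  convexHull ℝ {(0, 0), (M, 0), (M, M - 4), (M - 1, M - 2), (M - 3 / 2, M - 3 / 2)}

variable {M : ℝ}

lemma isCompact_polytope : IsCompact (polytope M) :=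
  (Set.toFinite _).isCompact_convexHull ℝ

lemma polytope_subset (hM : 4 ≤ M) :
    polytope M ⊆ {p | 0 ≤ p.2 ∧ p.2 ≤ p.1 ∧ p.1 ≤ M ∧ 2 * p.1 + p.2 ≤ 3 * M - 4 ∧
      p.1 + p.2 ≤ 2 * M - 3} := by
  refine convexHull_min ?_ ?_
  · rintro p (rfl | rfl | rfl | rfl | rfl) <;>
      simp only [mem_ofPred_eq] <;> refine ⟨?_, ?_, ?_, ?_, ?_⟩ <;> linarith
  · rintro ⟨x, y⟩ ⟨hy, hyx, hxM, hobl, hdiag⟩ ⟨x', y'⟩ ⟨hy', hyx', hxM', hobl', hdiag'⟩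
      a b ha hb hab
    obtain rfl : b = 1 - a := by linarith
    simp only at hy hyx hxM hobl hdiag hy' hyx' hxM' hobl' hdiag'
    refine ⟨?_, ?_, ?_, ?_, ?_⟩ <;>
      simp only [Prod.fst_add, Prod.snd_add, Prod.smul_fst, Prod.smul_snd, smul_eq_mul] <;>
      nlinarith

lemma volume_setOf_snd_eq_zero : volume {p : ℝ × ℝ | p.2 = 0} = 0 := by
  have hprod : {p : ℝ × ℝ | p.2 = 0} = univ ×ˢ {0} := by ext; simp
  rw [hprod, Measure.volume_eq_prod, Measure.prod_prod, Real.volume_singleton, mul_zero]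

lemma polytope_ae_eq (hM : 4 < M) :
    polytope M =ᵐ[volume] (triangle (M, 0) (M, M - 4) ∪ (triangle (M, M - 4) (M - 1, M - 2) ∪
      triangle (M - 1, M - 2) (M - 3 / 2, M - 3 / 2)) : Set (ℝ × ℝ)) := by
  refine Filter.EventuallyLE.antisymm ?_
    (LE.le.eventuallyLE (union_subset ?_ (union_subset ?_ ?_)))
  · have hae : ∀ᵐ p : ℝ × ℝ, p.2 ≠ 0 := measure_eq_zero_iff_ae_notMem.1 volume_setOf_snd_eq_zero
    filter_upwards [hae] with ⟨x, y⟩ hne hp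
    obtain ⟨hy, hyx, hxM, hobl, hdiag⟩ := polytope_subset hM.le hp
    simp only at hy hyx hxM hobl hdiag hne
    have hypos : 0 < y := hy.lt_of_ne' hne
    change _ ∨ _ ∨ _
    simp only [triangle, cross, mem_ofPred_eq]
    rcases le_or_gt 0 (x * (M - 4) - y * M) with hvert | hvert
    · exact .inl ⟨by nlinarith, hvert, by nlinarith⟩
    rcases le_or_gt 0 (x * (M - 2) - y * (M - 1)) with hslope | hslope
    · exact .inr (.inl ⟨by linarith, hslope, by linarith⟩)
    · exact .inr (.inr ⟨by linarith, by nlinarith, by linarith⟩)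
  all_goals
    refine triangle_subset (convex_convexHull ℝ _) ?_ ?_ ?_ (by simp only [cross]; nlinarith) <;>
      exact subset_convexHull ℝ _ (by simp [Prod.ext_iff])

theorem setIntegral_polytope (hM : 4 < M) {f : ℝ × ℝ → ℝ} (hf : Continuous f) :
    ∫ p in polytope M, f p = (∫ p in triangle (M, 0) (M, M - 4), f p) +
      ((∫ p in triangle (M, M - 4) (M - 1, M - 2), f p) +
        ∫ p in triangle (M - 1, M - 2) (M - 3 / 2, M - 3 / 2), f p) := by
  have hint : IntegrableOn f (triangle (M, 0) (M, M - 4) ∪ (triangle (M, M - 4) (M - 1, M - 2) ∪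
      triangle (M - 1, M - 2) (M - 3 / 2, M - 3 / 2))) :=
    (hf.continuousOn.integrableOn_compact isCompact_polytope).congr_set_ae (polytope_ae_eq hM).symm
  have hdisj : Disjoint (triangle (M, 0) (M, M - 4)) (triangle (M, M - 4) (M - 1, M - 2) ∪
      triangle (M - 1, M - 2) (M - 3 / 2, M - 3 / 2)) := by
    refine disjoint_left.2 ?_
    rintro ⟨x, y⟩ ⟨h, h', -⟩ (⟨h'', -⟩ | ⟨h'', -⟩) <;> simp only [cross] at h h' h''
    · linarith
    · have hy : 0 < (3 * M - 4) * y := mul_pos (by linarith) (by nlinarith)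
      nlinarith
  have hdisj' : Disjoint (triangle (M, M - 4) (M - 1, M - 2))
      (triangle (M - 1, M - 2) (M - 3 / 2, M - 3 / 2)) := by
    refine disjoint_left.2 ?_
    rintro ⟨x, y⟩ ⟨-, h, -⟩ ⟨h', -⟩
    simp only [cross] at h h'
    linarith
  rw [setIntegral_congr_set (polytope_ae_eq hM),
    setIntegral_union hdisj (measurableSet_triangle.union measurableSet_triangle)
      hint.left_of_union hint.right_of_union,
    setIntegral_union hdisj' measurableSet_triangle
      hint.right_of_union.left_of_union hint.right_of_union.right_of_union]

end Polytope

section Homogeneous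

variable {a b : ℝ × ℝ}

lemma setIntegral_triangle_mul_sub (hab : 0 < cross a b) (ℓ : ℝ × ℝ →L[ℝ] ℝ) {f : ℝ × ℝ → ℝ}
    {d : ℕ} (hfc : Continuous f) (hf : ∀ r p, 0 < r → f (r • p) = r ^ d * f p) (c : ℝ) :
    (∫ p in triangle a b, ℓ p * f p) - c * ∫ p in triangle a b, f p = cross a b / (d + 3) *
      ∫ t in (0)..1, (ℓ (a + t • (b - a)) - c * (d + 3) / (d + 2)) * f (a + t • (b - a)) := by
  have hℓf : ∀ r p, 0 < r → ℓ (r • p) * f (r • p) = r ^ (d + 1) * (ℓ p * f p) := by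
    intro r p hr
    rw [map_smul, hf r p hr, smul_eq_mul]
    ring
  rw [setIntegral_triangle hab hf, setIntegral_triangle hab hℓf]
  simp only [sub_mul]
  rw [intervalIntegral.integral_sub (Continuous.intervalIntegrable (by fun_prop) 0 1)
      (Continuous.intervalIntegrable (by fun_prop) 0 1), intervalIntegral.integral_const_mul]
  push_cast
  field_simp
  ring

/-- The density `P_m` of the Duistermaat–Heckman measure, with `k` in place of `2 * m - 7`. -/
def density (k : ℕ) (p : ℝ × ℝ) : ℝ :=
  4 * p.1 ^ k * p.2 ^ k * (p.1 + p.2) ^ 2 * (p.1 - p.2) ^ 2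

lemma continuous_density (k : ℕ) : Continuous (density k) := by
  unfold density
  fun_prop

lemma density_smul (k : ℕ) (r : ℝ) (p : ℝ × ℝ) :
    density k (r • p) = r ^ (2 * k + 4) * density k p := by
  simp only [density, Prod.smul_fst, Prod.smul_snd, smul_eq_mul, mul_pow]
  ring

lemma density_eq (k : ℕ) (p : ℝ × ℝ) :
    density k p = (p.1 * p.2) ^ k * (4 * (p.1 ^ 2 - p.2 ^ 2) ^ 2) := by
  rw [density, mul_pow]
  ring

/-- The integral of `(x + y - c) * density k` over the edge from `a` to `b`, parametrized by
`[0, 1]` and weighted by `cross a b`. -/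
noncomputable def edgeMoment (k : ℕ) (c : ℝ) (a b : ℝ × ℝ) : ℝ :=
  ∫ t in (0)..1, cross a b * ((a + t • (b - a)).1 + (a + t • (b - a)).2 - c) *
    density k (a + t • (b - a))

lemma setIntegral_triangle_density (hab : 0 < cross a b) (k : ℕ) (c : ℝ) :
    (∫ p in triangle a b, (p.1 + p.2) * density k p) - c * ∫ p in triangle a b, density k p =
      edgeMoment k (c * (2 * k + 7) / (2 * k + 6)) a b / (2 * k + 7) := by
  have h := setIntegral_triangle_mul_sub hab
    (ContinuousLinearMap.fst ℝ ℝ ℝ + ContinuousLinearMap.snd ℝ ℝ ℝ) (continuous_density k)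
    (fun r p _ => density_smul k r p) c
  have hd : ((2 * k + 4 : ℕ) : ℝ) + 3 = 2 * k + 7 ∧ ((2 * k + 4 : ℕ) : ℝ) + 2 = 2 * k + 6 := by
    push_cast
    constructor <;> ring
  simp only [add_apply, ContinuousLinearMap.coe_fst', ContinuousLinearMap.coe_snd', hd] at h
  rw [h, edgeMoment]
  simp only [mul_assoc, intervalIntegral.integral_const_mul]
  ring

end Homogeneous

section Potential

theorem integral_pow_mul_le {a b : ℝ} (hab : a ≤ b) (k : ℕ) {h h' φ φ' g : ℝ → ℝ}
    (hh : ∀ t ∈ Icc a b, HasDerivAt h (h' t) t) (hφ : ∀ t ∈ Icc a b, HasDerivAt φ (φ' t) t)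
    (hg : ContinuousOn g (Icc a b)) (h0 : ∀ t ∈ Ioo a b, 0 ≤ h t)
    (hle : ∀ t ∈ Ioo a b, g t ≤ (k + 1) * h' t * φ t + h t * φ' t) :
    ∫ t in a..b, h t ^ k * g t ≤ h b ^ (k + 1) * φ b - h a ^ (k + 1) * φ a := by
  have hhc : ContinuousOn h (Icc a b) := HasDerivAt.continuousOn hh
  have hφc : ContinuousOn φ (Icc a b) := HasDerivAt.continuousOn hφ
  refine intervalIntegral.integral_le_sub_of_hasDeriv_right_of_le hab
    (g := fun t => h t ^ (k + 1) * φ t) (by fun_prop)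
    (fun t ht => (((hh t (Ioo_subset_Icc_self ht)).pow (k + 1)).mul
      (hφ t (Ioo_subset_Icc_self ht))).hasDerivWithinAt)
    (ContinuousOn.integrableOn_Icc (by fun_prop)) fun t ht => ?_
  calc h t ^ k * g t ≤ h t ^ k * ((k + 1) * h' t * φ t + h t * φ' t) :=
        mul_le_mul_of_nonneg_left (hle t ht) (pow_nonneg (h0 t ht) k)
    _ = _ := by
        simp only [Nat.add_sub_cancel, Pi.pow_apply]
        push_cast
        ring

lemma edgeMoment_le (k : ℕ) (c : ℝ) {x₀ y₀ x₁ y₁ : ℝ} {φ φ' : ℝ → ℝ}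
    (hφ : ∀ t, HasDerivAt φ (φ' t) t) (hx₀ : 0 ≤ x₀) (hy₀ : 0 ≤ y₀) (hx₁ : 0 ≤ x₁) (hy₁ : 0 ≤ y₁)
    (hle : ∀ t ∈ Ioo (0 : ℝ) 1, ∀ x y, x = x₀ + t * (x₁ - x₀) → y = y₀ + t * (y₁ - y₀) →
      (x₀ * y₁ - y₀ * x₁) * (x + y - c) * (4 * (x ^ 2 - y ^ 2) ^ 2) ≤
        (k + 1) * ((x₁ - x₀) * y + x * (y₁ - y₀)) * φ t + x * y * φ' t) :
    edgeMoment k c (x₀, y₀) (x₁, y₁) ≤ (x₁ * y₁) ^ (k + 1) * φ 1 - (x₀ * y₀) ^ (k + 1) * φ 0 := by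
  have hderiv (u v t : ℝ) : HasDerivAt (fun t => u + t * (v - u)) (v - u) t := by
    simpa using ((hasDerivAt_id t).mul_const (v - u)).const_add u
  have hnonneg {u v t : ℝ} (hu : 0 ≤ u) (hv : 0 ≤ v) (ht : t ∈ Ioo (0 : ℝ) 1) :
      0 ≤ u + t * (v - u) := by
    nlinarith [mul_nonneg hu (sub_nonneg.2 ht.2.le), mul_nonneg hv ht.1.le]
  have hbound := integral_pow_mul_le zero_le_one k
    (fun t _ => (hderiv x₀ x₁ t).mul (hderiv y₀ y₁ t)) (fun t _ => hφ t)
    (g := fun t => (x₀ * y₁ - y₀ * x₁) * (x₀ + t * (x₁ - x₀) + (y₀ + t * (y₁ - y₀)) - c) *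
      (4 * ((x₀ + t * (x₁ - x₀)) ^ 2 - (y₀ + t * (y₁ - y₀)) ^ 2) ^ 2)) (by fun_prop)
    (fun t ht => mul_nonneg (hnonneg hx₀ hx₁ ht) (hnonneg hy₀ hy₁ ht))
    (fun t ht => hle t ht _ _ rfl rfl)
  convert hbound using 1
  · refine intervalIntegral.integral_congr fun t _ => ?_
    simp only [density_eq, cross, Prod.fst_add, Prod.snd_add, Prod.smul_fst, Prod.smul_snd,
      Prod.fst_sub, Prod.snd_sub, smul_eq_mul, Pi.mul_apply]
    ring
  · simp only [Pi.mul_apply, one_mul, zero_mul, add_zero, add_sub_cancel]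

end Potential

section Edges

variable {M : ℝ} {k : ℕ}

lemma sixteen_mul_le_sq_sub_sq_sq (hM : 4 ≤ M) {t : ℝ} (ht : t ∈ Icc (0 : ℝ) 1) :
    16 * (2 * M - 5) * (2 * M - 3) ≤ (M ^ 2 - ((M - 4) * t) ^ 2) ^ 2 := by
  have hy : ((M - 4) * t) ^ 2 ≤ (M - 4) ^ 2 :=
    pow_le_pow_left₀ (mul_nonneg (by linarith) ht.1)
      (mul_le_of_le_one_right (by linarith) ht.2) 2
  calc 16 * (2 * M - 5) * (2 * M - 3) ≤ (8 * (M - 2)) ^ 2 := by nlinarith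
    _ ≤ (M ^ 2 - ((M - 4) * t) ^ 2) ^ 2 := pow_le_pow_left₀ (by linarith) (by linarith) 2

lemma edgeMoment_vertical_le (hM : 6 ≤ M) (hk : (k : ℝ) = 2 * M - 7) :
    edgeMoment k (2 * M - 7 / 2) (M, 0) (M, M - 4) ≤
      -(176 / 3) * (2 * M - 3) * (M * (M - 4)) ^ (k + 1) := by
  have hφ (t : ℝ) : HasDerivAt
      (fun t => -(16 / 3) * (2 * M - 3) * (11 * t + 5 * (2 * M - 5) * (1 - t)))
      (-(16 / 3) * (2 * M - 3) * (11 - 5 * (2 * M - 5))) t := by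
    convert! (((hasDerivAt_id t).const_mul 11).add (((hasDerivAt_id t).const_sub 1).const_mul
      (5 * (2 * M - 5)))).const_mul (-(16 / 3) * (2 * M - 3)) using 1
    ring
  refine (edgeMoment_le k _ hφ (by linarith) le_rfl (by linarith) (by linarith) ?_).trans
    (le_of_eq (by rw [mul_zero, zero_pow k.succ_ne_zero]; ring))
  rintro t ⟨ht0, ht1⟩ x y hx hy
  obtain rfl : x = M := by simpa using hx
  obtain rfl : y = (x - 4) * t := by simpa [mul_comm] using hy
  have hgap := sixteen_mul_le_sq_sub_sq_sq (by linarith : 4 ≤ x) ⟨ht0.le, ht1.le⟩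
  have hlinear : (2 * x - 6) * (11 * t + 5 * (2 * x - 5) * (1 - t)) + t * (11 - 5 * (2 * x - 5)) ≤
      12 * (2 * x - 5) * (1 / 2 + (x - 4) * (1 - t)) := by
    nlinarith [mul_nonneg (mul_nonneg (sub_nonneg.2 hM) (by linarith : 0 ≤ 2 * x - 5))
      (sub_nonneg.2 ht1.le)]
  have hx4 : 0 ≤ x - 4 := by linarith
  have hxx4 : 0 ≤ x * (x - 4) := by nlinarith
  have hx3 : 0 ≤ 2 * x - 3 := by linarith
  have hweight : 0 ≤ 1 / 2 + (x - 4) * (1 - t) := by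
    nlinarith [mul_nonneg hx4 (sub_nonneg.2 ht1.le)]
  rw [hk]
  calc _ = -(4 * (x * (x - 4)) * (1 / 2 + (x - 4) * (1 - t))) *
          (x ^ 2 - ((x - 4) * t) ^ 2) ^ 2 := by ring
    _ ≤ -(4 * (x * (x - 4)) * (1 / 2 + (x - 4) * (1 - t))) *
          (16 * (2 * x - 5) * (2 * x - 3)) :=
        mul_le_mul_of_nonpos_left hgap
          (neg_nonpos.2 (mul_nonneg (mul_nonneg zero_le_four hxx4) hweight))
    _ = -(16 / 3 * (2 * x - 3) * (x * (x - 4))) *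
          (12 * (2 * x - 5) * (1 / 2 + (x - 4) * (1 - t))) := by ring
    _ ≤ -(16 / 3 * (2 * x - 3) * (x * (x - 4))) *
          ((2 * x - 6) * (11 * t + 5 * (2 * x - 5) * (1 - t)) + t * (11 - 5 * (2 * x - 5))) :=
        mul_le_mul_of_nonpos_left hlinear
          (neg_nonpos.2 (mul_nonneg (mul_nonneg (by norm_num) hx3) hxx4))
    _ = _ := by ring

lemma edgeMoment_oblique_le (hM : 6 ≤ M) (hk : (k : ℝ) = 2 * M - 7) :
    edgeMoment k (2 * M - 7 / 2) (M, M - 4) (M - 1, M - 2) ≤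
      (2 * M - 3) * (117 / 2 * (M * (M - 4)) ^ (k + 1) -
        3 / 2 * ((M - 1) * (M - 2)) ^ (k + 1)) := by
  have hφ (t : ℝ) : HasDerivAt
      (fun t => -((2 * M - 3) / 2) * (3 + 31 * (1 - t) + 81 * (1 - t) ^ 2 + 47 * (1 - t) ^ 3 -
        45 * (1 - t) ^ 4))
      ((2 * M - 3) / 2 * (31 + 162 * (1 - t) + 141 * (1 - t) ^ 2 - 180 * (1 - t) ^ 3)) t := by
    have hs : HasDerivAt (fun t : ℝ => 1 - t) (-1) t := by
      simpa using (hasDerivAt_id t).const_sub 1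
    convert! ((((hs.const_mul 31).const_add 3).add ((hs.pow 2).const_mul 81)).add
      ((hs.pow 3).const_mul 47)).sub ((hs.pow 4).const_mul 45) |>.const_mul (-((2 * M - 3) / 2))
      using 1
    norm_num
    ring
  refine (edgeMoment_le k _ hφ (by linarith) (by linarith) (by linarith) (by linarith) ?_).trans
    (le_of_eq (by ring))
  rintro t ⟨ht0, ht1⟩ x y rfl rfl
  obtain ⟨n, hn, rfl⟩ : ∃ n, 0 ≤ n ∧ M = n + 6 := ⟨M - 6, by linarith, by ring⟩
  rw [← sub_nonneg, hk]
  -- The slack in Bernstein form: its coefficients are positive polynomials in `n`.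
  have hbernstein : 0 ≤
      (304 * n ^ 3 + 2694 * n ^ 2 + 7163 * n + 5398) * (1 - t) ^ 5 +
      (580 * n ^ 3 + 4510 * n ^ 2 + 8582 * n + 136) * (t * (1 - t) ^ 4) +
      (345 * n ^ 3 + 5281 / 2 * n ^ 2 + 5294 * n + 1784) * (t ^ 2 * (1 - t) ^ 3) +
      (77 * n ^ 3 + 1019 / 2 * n ^ 2 + 1483 / 2 * n + 35) * (t ^ 3 * (1 - t) ^ 2) +
      (9 * n ^ 3 + 109 / 2 * n ^ 2 + 65 * n + 9) * (t ^ 4 * (1 - t)) +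
      (n ^ 3 + 19 / 2 * n ^ 2 + 61 / 2 * n + 36) * t ^ 5 := by
    have := sub_nonneg.2 ht1.le
    positivity
  convert hbernstein using 1
  ring

lemma edgeMoment_diagonal_le (hM : 9 / 4 ≤ M) (hk : (k : ℝ) = 2 * M - 7) :
    edgeMoment k (2 * M - 7 / 2) (M - 1, M - 2) (M - 3 / 2, M - 3 / 2) ≤
      (2 * M - 3) * (3 / 2 * ((M - 1) * (M - 2)) ^ (k + 1)) := by
  have hφ (t : ℝ) : HasDerivAt (fun t => -(3 / 2) * (2 * M - 3) * (1 - t) ^ 3)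
      (9 / 2 * (2 * M - 3) * (1 - t) ^ 2) t := by
    convert! (((hasDerivAt_id t).const_sub 1).pow 3).const_mul (-(3 / 2) * (2 * M - 3)) using 1
    norm_num
    ring
  refine (edgeMoment_le k _ hφ (by linarith) (by linarith) (by linarith) (by linarith) ?_).trans
    (le_of_eq (by ring))
  rintro t ⟨ht0, ht1⟩ x y rfl rfl
  rw [← sub_nonneg, hk]
  have hquad : 0 ≤ (2 * M - 3) ^ 2 - (12 * M - 27) * (1 - t) ^ 2 := by
    nlinarith [mul_nonneg (by linarith : 0 ≤ 12 * M - 27)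
      (sub_nonneg.2 (pow_le_one₀ (by linarith) (by linarith) : (1 - t) ^ 2 ≤ 1))]
  have hprod : 0 ≤ (2 * M - 3) * (1 - t) ^ 2 / 8 *
      ((2 * M - 3) ^ 2 - (12 * M - 27) * (1 - t) ^ 2) :=
    mul_nonneg (div_nonneg (mul_nonneg (by linarith) (sq_nonneg _)) (by norm_num)) hquad
  convert hprod using 1
  ring

end Edges

theorem setIntegral_polytope_density_lt {M : ℝ} {k : ℕ} (hM : 6 ≤ M) (hk : (k : ℝ) = 2 * M - 7) :
    ∫ p in polytope M, (p.1 + p.2) * density k p <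
      (2 * M - 4) * ∫ p in polytope M, density k p := by
  have hc : (2 * M - 4) * (2 * k + 7) / (2 * k + 6) = 2 * M - 7 / 2 := by
    rw [hk, div_eq_iff (by linarith)]
    ring
  have htriangle {a b : ℝ × ℝ} (hab : 0 < cross a b) :=
    hc ▸ setIntegral_triangle_density hab k (2 * M - 4)
  have h₁ := htriangle (a := (M, 0)) (b := (M, M - 4)) (by simp only [cross]; nlinarith)
  have h₂ := htriangle (a := (M, M - 4)) (b := (M - 1, M - 2)) (by simp only [cross]; nlinarith)
  have h₃ := htriangle (a := (M - 1, M - 2)) (b := (M - 3 / 2, M - 3 / 2))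
    (by simp only [cross]; nlinarith)
  have hsum : edgeMoment k (2 * M - 7 / 2) (M, 0) (M, M - 4) +
      edgeMoment k (2 * M - 7 / 2) (M, M - 4) (M - 1, M - 2) +
      edgeMoment k (2 * M - 7 / 2) (M - 1, M - 2) (M - 3 / 2, M - 3 / 2) < 0 := by
    have hpos : 0 < (2 * M - 3) * (M * (M - 4)) ^ (k + 1) :=
      mul_pos (by linarith) (pow_pos (mul_pos (by linarith) (by linarith)) _)
    linarith [edgeMoment_vertical_le hM hk, edgeMoment_oblique_le hM hk,
      edgeMoment_diagonal_le (by linarith) hk]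
  have hneg := div_neg_of_neg_of_pos hsum (by positivity : (0 : ℝ) < 2 * k + 7)
  rw [add_div, add_div, ← h₁, ← h₂, ← h₃] at hneg
  rw [setIntegral_polytope (by linarith) (continuous_density k), setIntegral_polytope
    (by linarith) (f := fun p => (p.1 + p.2) * density k p)
    ((continuous_fst.add continuous_snd).mul (continuous_density k))]
  linarith

lemma setIntegral_polytope_mul_density_nonneg {M : ℝ} (hM : 4 ≤ M) (k : ℕ) :
    0 ≤ ∫ p in polytope M, (p.1 + p.2) * density k p := by
  refine setIntegral_nonneg isCompact_polytope.measurableSet fun p hp => ?_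
  obtain ⟨hy, hyx, -⟩ := polytope_subset hM hp
  have hx := hy.trans hyx
  unfold density
  positivity

end BlowupAIII

/-- For `m ≥ 6`, the barycenter of the moment polytope `Δ_m^{Bℓ}` of the blow-up
`Bℓ_Z(X_m)` with respect to the Duistermaat–Heckman measure satisfies
`x̄ + ȳ < 2m−4` (Proposition 4.3; K-unstability for `m ≥ 6`). -/
theorem barycenter_blowup_AIII_two_m (m : ℕ) (hm : 6 ≤ m) :
    let Δ : Set (ℝ × ℝ) := convexHull ℝ
      {((0 : ℝ), (0 : ℝ)), ((m : ℝ), 0), ((m : ℝ), (m : ℝ) - 4),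
        ((m : ℝ) - 1, (m : ℝ) - 2), ((m : ℝ) - 3 / 2, (m : ℝ) - 3 / 2)}
    let P : ℝ × ℝ → ℝ := fun p =>
      4 * p.1 ^ (2 * m - 7) * p.2 ^ (2 * m - 7) * (p.1 + p.2) ^ 2 * (p.1 - p.2) ^ 2
    let xbar : ℝ := (∫ p in Δ, p.1 * P p) / (∫ p in Δ, P p)
    let ybar : ℝ := (∫ p in Δ, p.2 * P p) / (∫ p in Δ, P p)
    xbar + ybar < 2 * (m : ℝ) - 4 := by
  intro Δ P xbar ybar
  have hM : (6 : ℝ) ≤ m := by exact_mod_cast hm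
  have hk : ((2 * m - 7 : ℕ) : ℝ) = 2 * m - 7 := by
    rw [Nat.cast_sub (by lia)]
    push_cast
    ring
  have hint {f : ℝ × ℝ → ℝ} (hf : Continuous f) : IntegrableOn f Δ :=
    hf.continuousOn.integrableOn_compact BlowupAIII.isCompact_polytope
  have hPc : Continuous P := BlowupAIII.continuous_density _
  have hadd : (∫ p in Δ, p.1 * P p) + ∫ p in Δ, p.2 * P p = ∫ p in Δ, (p.1 + p.2) * P p := by
    simp only [add_mul]
    exact (integral_add (hint (continuous_fst.mul hPc)) (hint (continuous_snd.mul hPc))).symm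
  have hlt : ∫ p in Δ, (p.1 + p.2) * P p < (2 * m - 4) * ∫ p in Δ, P p :=
    BlowupAIII.setIntegral_polytope_density_lt hM hk
  have hnonneg : 0 ≤ ∫ p in Δ, (p.1 + p.2) * P p :=
    BlowupAIII.setIntegral_polytope_mul_density_nonneg (by linarith) _
  have hpos : 0 < ∫ p in Δ, P p :=
    (pos_iff_pos_of_mul_pos (hnonneg.trans_lt hlt)).1 (by linarith)
  rw [← add_div, hadd, div_lt_iff₀ hpos]
  exact hlt
end
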